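/- There exists a single transition matrix T ∈ 𝒯 such that lim_{n→∞} p_T^n(x) = plow*(x) for every x ∈ X, where plow* := lim_{n→∞} plow^n; that is, the lower hitting probability of the imprecise Markov chain is attained by one homogeneous (precise) transition matrix compatible with 𝒯. -/

import Mathlib

open Filter Topology

variable {X : Type*}

/-- The application of a transition "matrix" `T` to an extended-real-valued
function `f`, `(Tf)(x) = ∑ y, T x y * f y`, with the convention `0 * ⊤ = 0`
(which is the convention of `EReal` multiplication). -/
noncomputable def matApply [Fintype X] (T : X → X → ℝ) (f : X → EReal) (x : X) : EReal :=
  ∑ y, (T x y : EReal) * f y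

/-- `T` is a transition matrix: nonnegative entries, rows summing to one. -/
def IsTransMat [Fintype X] (T : X → X → ℝ) : Prop :=
  (∀ x y, 0 ≤ T x y) ∧ ∀ x, ∑ y, T x y = 1

/-- `𝒯` has separately specified rows. -/
def HasSepRows [Fintype X] (𝒯 : Set (X → X → ℝ)) : Prop :=
  ∀ sel : X → X → X → ℝ, (∀ x, sel x ∈ 𝒯) → ∃ T ∈ 𝒯, ∀ x y, T x y = sel x x y

/-- The lower transition operator of `𝒯`. -/
noncomputable def lowerOp [Fintype X] (𝒯 : Set (X → X → ℝ)) (f : X → EReal) (x : X) : EReal :=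
  ⨅ T ∈ 𝒯, matApply T f x

/-- The upper transition operator of `𝒯`. -/
noncomputable def upperOp [Fintype X] (𝒯 : Set (X → X → ℝ)) (f : X → EReal) (x : X) : EReal :=
  ⨆ T ∈ 𝒯, matApply T f x

/-- The `{0,1}`-indicator of a set `B ⊆ X`, as a real-valued function. -/
noncomputable def indR (B : Set X) : X → ℝ := fun x => Set.indicator B 1 x

/-- The restriction of the lower transition operator to real-valued functions
(on which it is real-valued). -/
noncomputable def lowerOpR [Fintype X] (𝒯 : Set (X → X → ℝ)) (f : X → ℝ) (x : X) : ℝ :=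
  (lowerOp 𝒯 (fun y => (f y : EReal)) x).toReal

/-- The restriction of the upper transition operator to real-valued functions
(on which it is real-valued). -/
noncomputable def upperOpR [Fintype X] (𝒯 : Set (X → X → ℝ)) (f : X → ℝ) (x : X) : ℝ :=
  (upperOp 𝒯 (fun y => (f y : EReal)) x).toReal

/-- The lower hitting-probability iterates: `plow⁰ = 1_A`,
`plowⁿ⁺¹ = 1_A + 1_{Aᶜ} · (L plowⁿ)`. -/
noncomputable def plowIter [Fintype X] (𝒯 : Set (X → X → ℝ)) (A : Set X) : ℕ → X → ℝ
  | 0 => indR A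
  | n + 1 => fun x => indR A x + indR Aᶜ x * lowerOpR 𝒯 (plowIter 𝒯 A n) x

/-- The upper hitting-probability iterates: `pup⁰ = 1_A`,
`pupⁿ⁺¹ = 1_A + 1_{Aᶜ} · (U pupⁿ)`. -/
noncomputable def pupIter [Fintype X] (𝒯 : Set (X → X → ℝ)) (A : Set X) : ℕ → X → ℝ
  | 0 => indR A
  | n + 1 => fun x => indR A x + indR Aᶜ x * upperOpR 𝒯 (pupIter 𝒯 A n) x
/-- The hitting-probability iterates for a single (precise) transition matrix `T`:
`p_T⁰ = 1_A`, `p_Tⁿ⁺¹ = 1_A + 1_{Aᶜ} · (T p_Tⁿ)`; their pointwise limit is the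
probability of ever hitting `A` for the homogeneous Markov chain with matrix `T`. -/
noncomputable def pPrecIter [Fintype X] (T : X → X → ℝ) (A : Set X) : ℕ → X → ℝ
  | 0 => indR A
  | n + 1 => fun x => indR A x + indR Aᶜ x * ∑ y, T x y * pPrecIter T A n y

theorem aux_matApply_coe [Fintype X] (T : X → X → ℝ) (f : X → ℝ) (x : X) :
    matApply T (fun y => (f y : EReal)) x = ((∑ y, T x y * f y : ℝ) : EReal) := by
  classical
  have h : ∀ s : Finset X, ∑ y ∈ s, (T x y : EReal) * (f y : EReal)
      = ((∑ y ∈ s, T x y * f y : ℝ) : EReal) := by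
    intro s
    induction s using Finset.induction_on with
    | empty => simp
    | insert a s ha ih =>
      rw [Finset.sum_insert ha, Finset.sum_insert ha, ih, EReal.coe_add, EReal.coe_mul]
  exact h _

theorem aux_compact [Fintype X] (𝒯 : Set (X → X → ℝ))
    (hmem : ∀ T ∈ 𝒯, IsTransMat T) (hcl : IsClosed 𝒯) : IsCompact 𝒯 := by
  have hK : IsCompact (Set.pi Set.univ (fun _ : X => Set.pi Set.univ
      (fun _ : X => Set.Icc (0:ℝ) 1))) :=
    isCompact_univ_pi (fun _ => isCompact_univ_pi (fun _ => isCompact_Icc))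
  refine hK.of_isClosed_subset hcl ?_
  intro T hT x _ y _
  obtain ⟨h0, h1⟩ := hmem T hT
  refine ⟨h0 x y, ?_⟩
  rw [← h1 x]
  exact Finset.single_le_sum (f := fun y => T x y) (fun i _ => h0 x i) (Finset.mem_univ y)

theorem aux_lower [Fintype X] (𝒯 : Set (X → X → ℝ))
    (hmem : ∀ T ∈ 𝒯, IsTransMat T) (hne : 𝒯.Nonempty) (hcl : IsClosed 𝒯)
    (f : X → ℝ) (x : X) :
    (∃ T ∈ 𝒯, lowerOpR 𝒯 f x = ∑ y, T x y * f y) ∧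
      ∀ T ∈ 𝒯, lowerOpR 𝒯 f x ≤ ∑ y, T x y * f y := by
  have hc : Continuous (fun T : X → X → ℝ => ∑ y, T x y * f y) := by fun_prop
  obtain ⟨T, hT, hmin⟩ := (aux_compact 𝒯 hmem hcl).exists_isMinOn hne hc.continuousOn
  have hmin' : ∀ S ∈ 𝒯, ∑ y, T x y * f y ≤ ∑ y, S x y * f y := fun S hS => hmin hS
  have key : lowerOpR 𝒯 f x = ∑ y, T x y * f y := by
    have : lowerOp 𝒯 (fun y => (f y : EReal)) x = ((∑ y, T x y * f y : ℝ) : EReal) := by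
      unfold lowerOp
      simp only [aux_matApply_coe]
      apply le_antisymm
      · exact iInf₂_le T hT
      · exact le_iInf₂ (fun S hS => EReal.coe_le_coe_iff.2 (hmin' S hS))
    rw [lowerOpR, this, EReal.toReal_coe]
  exact ⟨⟨T, hT, key⟩, fun S hS => key ▸ hmin' S hS⟩

theorem aux_sum_mono [Fintype X] {T : X → X → ℝ} (hT : IsTransMat T) {f g : X → ℝ}
    (h : ∀ y, f y ≤ g y) (x : X) : ∑ y, T x y * f y ≤ ∑ y, T x y * g y :=
  Finset.sum_le_sum (fun y _ => mul_le_mul_of_nonneg_left (h y) (hT.1 x y))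

theorem aux_ind_mem {A : Set X} {x : X} (h : x ∈ A) (r : ℝ) :
    indR A x + indR Aᶜ x * r = 1 := by simp [indR, h]

theorem aux_ind_not_mem {A : Set X} {x : X} (h : x ∉ A) (r : ℝ) :
    indR A x + indR Aᶜ x * r = r := by simp [indR, h]

/-- The lower hitting probability of the imprecise Markov chain is attained by a single
homogeneous (precise) transition matrix compatible with `𝒯`. -/
theorem lower_hitting_prob_attained [Fintype X] [Nonempty X]
    (𝒯 : Set (X → X → ℝ))
    (hmem : ∀ T ∈ 𝒯, IsTransMat T) (hne : 𝒯.Nonempty) (hcl : IsClosed 𝒯)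
    (hcv : Convex ℝ 𝒯) (hsep : HasSepRows 𝒯) (A : Set X) :
    ∃ plowStar : X → ℝ,
      (∀ x, Tendsto (fun n => plowIter 𝒯 A n x) atTop (𝓝 (plowStar x))) ∧
      ∃ T ∈ 𝒯, ∀ x, Tendsto (fun n => pPrecIter T A n x) atTop (𝓝 (plowStar x)) := by
  have hL := aux_lower 𝒯 hmem hne hcl
  have hi0 : ∀ x, 0 ≤ indR A x := fun x => by
    by_cases h : x ∈ A <;> simp [indR, h]
  have hi1 : ∀ x, indR A x ≤ 1 := fun x => by
    by_cases h : x ∈ A <;> simp [indR, h]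
  have hLmono : ∀ f g : X → ℝ, (∀ y, f y ≤ g y) → ∀ x, lowerOpR 𝒯 f x ≤ lowerOpR 𝒯 g x := by
    intro f g h x
    obtain ⟨T, hT, e⟩ := (hL g x).1
    rw [e]
    exact ((hL f x).2 T hT).trans (aux_sum_mono (hmem T hT) h x)
  have hb : ∀ n x, 0 ≤ plowIter 𝒯 A n x ∧ plowIter 𝒯 A n x ≤ 1 := by
    intro n
    induction n with
    | zero => exact fun x => ⟨hi0 x, hi1 x⟩
    | succ n ih =>
      intro x
      simp only [plowIter]
      by_cases h : x ∈ A
      · rw [aux_ind_mem h]; norm_num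
      · rw [aux_ind_not_mem h]
        obtain ⟨T, hT, e⟩ := (hL (plowIter 𝒯 A n) x).1
        rw [e]
        constructor
        · exact Finset.sum_nonneg (fun y _ => mul_nonneg ((hmem T hT).1 x y) (ih y).1)
        · refine (aux_sum_mono (g := fun _ => 1) (hmem T hT) (fun y => (ih y).2) x).trans ?_
          simp [(hmem T hT).2 x]
  have hstep : ∀ n x, plowIter 𝒯 A n x ≤ plowIter 𝒯 A (n+1) x := by
    intro n
    induction n with
    | zero =>
      intro x
      by_cases h : x ∈ A
      · simp only [plowIter]
        rw [aux_ind_mem h]; exact hi1 x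
      · have := (hb 1 x).1
        have h0 : plowIter 𝒯 A 0 x = 0 := by simp [plowIter, indR, h]
        rw [h0]; exact this
    | succ n ih =>
      intro x
      by_cases h : x ∈ A
      · simp only [plowIter]
        rw [aux_ind_mem h, aux_ind_mem h]
      · rw [plowIter, plowIter]
        simp only []
        rw [aux_ind_not_mem h, aux_ind_not_mem h]
        exact hLmono _ _ ih x
  have hmono : ∀ x, Monotone (fun n => plowIter 𝒯 A n x) := fun x =>
    monotone_nat_of_le_succ (fun n => hstep n x)
  have hbdd : ∀ x, BddAbove (Set.range (fun n => plowIter 𝒯 A n x)) := fun x =>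
    ⟨1, by rintro _ ⟨n, rfl⟩; exact (hb n x).2⟩
  obtain ⟨p, hp⟩ : ∃ p : X → ℝ, ∀ x, Tendsto (fun n => plowIter 𝒯 A n x) atTop (𝓝 (p x)) :=
    ⟨_, fun x => tendsto_atTop_ciSup (hmono x) (hbdd x)⟩
  have hle : ∀ n x, plowIter 𝒯 A n x ≤ p x := fun n x => (hmono x).ge_of_tendsto (hp x) n
  refine ⟨p, hp, ?_⟩
  let K : ℕ → Set (X → X → ℝ) := fun n =>
    𝒯 ∩ {T | ∀ x, x ∉ A → ∑ y, T x y * plowIter 𝒯 A n y ≤ p x}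
  have hKcl : ∀ n, IsClosed (K n) := by
    intro n
    refine hcl.inter ?_
    simp only [Set.setOf_forall]
    refine isClosed_iInter fun x => isClosed_iInter fun _ => ?_
    exact isClosed_le (by fun_prop) continuous_const
  have hKne : ∀ n, (K n).Nonempty := by
    intro n
    choose sel hsel he using fun x => (hL (plowIter 𝒯 A n) x).1
    obtain ⟨T, hT, hTe⟩ := hsep sel hsel
    refine ⟨T, hT, fun x hx => ?_⟩
    have h1 := hle (n+1) x
    rw [plowIter] at h1
    simp only [] at h1
    rw [aux_ind_not_mem hx, he x] at h1
    simpa only [hTe] using h1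
  have hKanti : ∀ n, K (n+1) ⊆ K n := by
    rintro n T ⟨hT, h⟩
    exact ⟨hT, fun x hx => (aux_sum_mono (hmem T hT) (hstep n) x).trans (h x hx)⟩
  obtain ⟨T, hTK⟩ := IsCompact.nonempty_iInter_of_sequence_nonempty_isCompact_isClosed K hKanti hKne
    ((aux_compact 𝒯 hmem hcl).of_isClosed_subset (hKcl 0) Set.inter_subset_left) hKcl
  rw [Set.mem_iInter] at hTK
  have hT : T ∈ 𝒯 := (hTK 0).1
  have hTp : ∀ x, x ∉ A → ∑ y, T x y * p y ≤ p x := by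
    intro x hx
    have ht : Tendsto (fun n => ∑ y, T x y * plowIter 𝒯 A n y) atTop (𝓝 (∑ y, T x y * p y)) :=
      tendsto_finset_sum _ (fun y _ => (hp y).const_mul _)
    exact le_of_tendsto' ht (fun n => (hTK n).2 x hx)
  refine ⟨T, hT, fun x => ?_⟩
  have hup : ∀ n x, pPrecIter T A n x ≤ p x := by
    intro n
    induction n with
    | zero => exact fun x => hle 0 x
    | succ n ih =>
      intro x
      by_cases h : x ∈ A
      · have h1 := hle 1 x
        simp only [plowIter] at h1
        rw [aux_ind_mem h] at h1
        simp only [pPrecIter]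
        rwa [aux_ind_mem h]
      · simp only [pPrecIter]
        rw [aux_ind_not_mem h]
        exact (aux_sum_mono (hmem T hT) ih x).trans (hTp x h)
  have hlow : ∀ n x, plowIter 𝒯 A n x ≤ pPrecIter T A n x := by
    intro n
    induction n with
    | zero => exact fun x => le_rfl
    | succ n ih =>
      intro x
      simp only [pPrecIter, plowIter]
      by_cases h : x ∈ A
      · rw [aux_ind_mem h, aux_ind_mem h]
      · rw [aux_ind_not_mem h, aux_ind_not_mem h]
        exact ((hL _ x).2 T hT).trans (aux_sum_mono (hmem T hT) ih x)
  exact tendsto_of_tendsto_of_tendsto_of_le_of_le (hp x) tendsto_const_nhds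
    (fun n => hlow n x) (fun n => hup n x)
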